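/- arXiv:2605.19388 — 5 statements merged into one kernel-verified Lean document; each statement's English description precedes it below -/
import Mathlib

section
/- Let N, L be positive integers and M^(1), …, M^(L) positive integers with M = Σ_l M^(l). For each n = 1, …, N and l = 1, …, L, let R_n^(l) be an M^(l) × M^(l) Hermitian positive semidefinite complex matrix, and let R_n = blkdiag(R_n^(1), …, R_n^(L)) be the M × M block-diagonal matrix with these blocks. Assume S := Σ_{n=1}^N R_n is positive definite. Then R_1, …, R_N are jointly diagonalizable if and only if, for every l = 1, …, L, the matrices R_1^(l), …, R_N^(l) are jointly diagonalizable. -/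
open Matrix
open scoped ComplexOrder

/-- A family of Hermitian matrices is *jointly diagonalizable* if there exists a
nonsingular matrix `W` such that `Wᴴ * R n * W` is diagonal for all `n`. -/
def JointlyDiagonalizable {m : Type*} [Fintype m] [DecidableEq m] {ι : Type*}
    (R : ι → Matrix m m ℂ) : Prop :=
  ∃ W : Matrix m m ℂ, IsUnit W.det ∧ ∀ n, (Wᴴ * R n * W).IsDiag

theorem jd_aux_isDiag_comm {m : Type*} [Fintype m] [DecidableEq m] {A B : Matrix m m ℂ}
    (hA : A.IsDiag) (hB : B.IsDiag) : A * B = B * A := by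
  rw [← hA.diagonal_diag, ← hB.diagonal_diag, diagonal_mul_diagonal, diagonal_mul_diagonal]
  simp only [mul_comm]

theorem jd_aux_comm {m : Type*} [Fintype m] [DecidableEq m] {A B S T W : Matrix m m ℂ}
    (hW : IsUnit W.det) (hA : (Wᴴ * A * W).IsDiag) (hB : (Wᴴ * B * W).IsDiag)
    (hS : (Wᴴ * S * W).IsDiag) (hST : S * T = 1) : A * T * B = B * T * A := by
  have hTS : T * S = 1 := mul_eq_one_comm.mp hST
  have h1 : W * W⁻¹ = 1 := mul_nonsing_inv W hW
  have h2 : W⁻¹ * W = 1 := nonsing_inv_mul W hW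
  have h3 : Wᴴ * W⁻¹ᴴ = 1 := by rw [← conjTranspose_mul, h2, conjTranspose_one]
  have h4 : W⁻¹ᴴ * Wᴴ = 1 := by rw [← conjTranspose_mul, h1, conjTranspose_one]
  set V := W⁻¹ᴴ
  set E := W⁻¹ * T * V with hE
  set D := Wᴴ * S * W with hD
  have hDE : D * E = 1 := by
    calc D * E = Wᴴ * (S * (W * W⁻¹) * T) * V := by simp only [hD, hE, Matrix.mul_assoc]
      _ = 1 := by rw [h1, Matrix.mul_one, hST, Matrix.mul_one, h3]
  have hED : E * D = 1 := mul_eq_one_comm.mp hDE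
  have key : ∀ X : Matrix m m ℂ, X.IsDiag → X * E = E * X := fun X hX => by
    calc X * E = E * D * X * E := by rw [hED, Matrix.one_mul]
      _ = E * (X * D) * E := by rw [Matrix.mul_assoc E D X, jd_aux_isDiag_comm hS hX]
      _ = E * X * (D * E) := by simp only [Matrix.mul_assoc]
      _ = E * X := by rw [hDE, Matrix.mul_one]
  have exp : ∀ X Y : Matrix m m ℂ,
      X * T * Y = V * ((Wᴴ * X * W) * E * (Wᴴ * Y * W)) * W⁻¹ := fun X Y => by
    calc X * T * Y = (V * Wᴴ) * X * (W * W⁻¹) * T * (V * Wᴴ) * Y * (W * W⁻¹) := by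
          rw [h1, h4]; simp only [Matrix.one_mul, Matrix.mul_one]
      _ = _ := by simp only [hE, Matrix.mul_assoc]
  rw [exp, exp, key _ hA, key _ hB, Matrix.mul_assoc E, Matrix.mul_assoc E,
    jd_aux_isDiag_comm hA hB]

open Module in
theorem jd_aux_unitary {m ι : Type*} [Fintype m] [DecidableEq m]
    (A : ι → Matrix m m ℂ) (hA : ∀ i, (A i).IsHermitian) (hC : ∀ i j, A i * A j = A j * A i) :
    JointlyDiagonalizable A := by
  classical
  let T : ι → EuclideanSpace ℂ m →ₗ[ℂ] EuclideanSpace ℂ m := fun i => toEuclideanLin (A i)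
  have hT : ∀ i, (T i).IsSymmetric := fun i => isSymmetric_toEuclideanLin_iff.mpr (hA i)
  have hTC : Pairwise (Function.onFun Commute T) := by
    intro i j _
    change T i * T j = T j * T i
    refine LinearMap.ext fun x => ?_
    simp only [T, Module.End.mul_apply, toEuclideanLin_apply, mulVec_mulVec, hC i j]
  have hint := LinearMap.IsSymmetric.directSum_isInternal_of_pairwise_commute hT hTC
  have horth := LinearMap.IsSymmetric.orthogonalFamily_iInf_eigenspaces hT
  let v := fun γ : ι → ℂ => stdOrthonormalBasis ℂ
    (⨅ j, End.eigenspace (T j) (γ j) : Submodule ℂ (EuclideanSpace ℂ m))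
  let b := hint.collectedBasis (fun γ => (v γ).toBasis)
  have hb : Orthonormal ℂ b :=
    hint.collectedBasis_orthonormal horth (fun γ => by
      rw [OrthonormalBasis.coe_toBasis]; exact (v γ).orthonormal)
  let e := b.indexEquiv (EuclideanSpace.basisFun m ℂ).toBasis
  let c : m → EuclideanSpace ℂ m := fun k => b (e.symm k)
  have hc : Orthonormal ℂ c := hb.comp _ e.symm.injective
  have hev : ∀ k i, ∃ μ : ℂ, A i *ᵥ (c k).ofLp = μ • (c k).ofLp := fun k i => by
    have h := hint.collectedBasis_mem (fun γ => (v γ).toBasis) (e.symm k)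
    rw [Submodule.mem_iInf] at h
    have h2 := End.mem_eigenspace_iff.mp (h i)
    refine ⟨(e.symm k).1 i, ?_⟩
    have h3 := congrArg WithLp.ofLp h2
    exact h3
  have hdot : ∀ k l, star (c k).ofLp ⬝ᵥ (c l).ofLp = if k = l then 1 else 0 := fun k l => by
    rw [← orthonormal_iff_ite.mp hc k l, EuclideanSpace.inner_eq_star_dotProduct, dotProduct_comm]
  let W : Matrix m m ℂ := of fun i k => (c k).ofLp i
  have hWW : Wᴴ * W = 1 := by
    ext k l
    rw [one_apply, ← hdot k l]
    rfl
  refine ⟨W, isUnit_det_of_left_inverse hWW, fun i k l hkl => ?_⟩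
  obtain ⟨μ, hμ⟩ := hev l i
  have : (Wᴴ * A i * W) k l = star (c k).ofLp ⬝ᵥ (A i *ᵥ (c l).ofLp) := by
    rw [Matrix.mul_assoc]; rfl
  rw [this, hμ, dotProduct_smul, hdot, if_neg hkl, smul_zero]

open scoped MatrixOrder in
theorem jd_aux_sqrt {m : Type*} [Fintype m] [DecidableEq m] {S : Matrix m m ℂ}
    (hS : S.PosDef) : ∃ B : Matrix m m ℂ, IsUnit B.det ∧ S⁻¹ = B * Bᴴ := by
  have h := hS.inv
  obtain ⟨B, hB⟩ : ∃ B : Matrix m m ℂ, S⁻¹ = B * Bᴴ := by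
    obtain ⟨B, hB⟩ := CStarAlgebra.nonneg_iff_eq_star_mul_self.mp h.posSemidef.nonneg
    exact ⟨Bᴴ, by rw [hB, conjTranspose_conjTranspose]; rfl⟩
  refine ⟨B, ?_, hB⟩
  have hu := h.isUnit
  rw [isUnit_iff_isUnit_det, hB, det_mul] at hu
  exact isUnit_of_mul_isUnit_left hu

theorem jd_aux_of_comm {m ι : Type*} [Fintype m] [DecidableEq m] {S : Matrix m m ℂ}
    (hS : S.PosDef) (A : ι → Matrix m m ℂ) (hA : ∀ i, (A i).IsHermitian)
    (hC : ∀ i j, A i * S⁻¹ * A j = A j * S⁻¹ * A i) : JointlyDiagonalizable A := by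
  obtain ⟨B, hB, hSB⟩ := jd_aux_sqrt hS
  obtain ⟨V, hV, hd⟩ := jd_aux_unitary (fun i => Bᴴ * A i * B)
    (fun i => isHermitian_conjTranspose_mul_mul B (hA i)) (fun i j => by
      have h := congrArg (fun X => Bᴴ * X * B) (hC i j)
      simp only [hSB, Matrix.mul_assoc] at h ⊢
      exact h)
  refine ⟨B * V, by rw [det_mul]; exact hB.mul hV, fun i => ?_⟩
  have := hd i
  simp only [conjTranspose_mul, Matrix.mul_assoc] at this ⊢
  exact this

/-- the block-diagonal matrices `R n = blkdiag (R n 1, …, R n L)` are jointly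
diagonalizable iff for every `l` the blocks `R 1 l, …, R N l` are jointly diagonalizable,
provided each block is Hermitian PSD and `S = ∑ n, R n` is positive definite. -/
theorem blockDiagonal_jointlyDiagonalizable_iff
    (N L : ℕ) (hN : 0 < N) (hL : 0 < L) (M : Fin L → ℕ) (hM : ∀ l, 0 < M l)
    (R : Fin N → ∀ l, Matrix (Fin (M l)) (Fin (M l)) ℂ)
    (hR : ∀ n l, (R n l).PosSemidef)
    (hS : (∑ n, Matrix.blockDiagonal' (R n)).PosDef) :
    JointlyDiagonalizable (fun n => Matrix.blockDiagonal' (R n)) ↔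
      ∀ l, JointlyDiagonalizable (fun n => R n l) := by
  have hsum : ∑ n, blockDiagonal' (R n) = blockDiagonal' (fun l => ∑ n, R n l) := by
    have h := map_sum (blockDiagonal'AddMonoidHom (fun l => Fin (M l)) (fun l => Fin (M l)) ℂ)
      R Finset.univ
    refine Eq.trans h.symm ?_
    change blockDiagonal' _ = blockDiagonal' _
    congr 1; ext1 l; exact Finset.sum_apply _ _ _
  constructor
  · rintro ⟨W, hW, hd⟩ l
    have hSl : ∀ l, (∑ n, R n l).PosDef := fun l => by
      have h := hS.submatrix (e := fun i : Fin (M l) => (⟨l, i⟩ : Σ l, Fin (M l)))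
        (fun i j h => by simpa using h)
      rw [hsum] at h
      convert h using 1
      ext i j
      simp [blockDiagonal'_apply_eq]
    refine jd_aux_of_comm (hSl l) _ (fun n => (hR n l).isHermitian) (fun a b => ?_)
    have hST : (∑ n, blockDiagonal' (R n)) * blockDiagonal' (fun l => (∑ n, R n l)⁻¹) = 1 := by
      rw [hsum, ← blockDiagonal'_mul, ← blockDiagonal'_one]
      congr 1; ext1 l
      exact mul_nonsing_inv _ ((isUnit_iff_isUnit_det _).mp (hSl l).isUnit)
    have hdS : (Wᴴ * (∑ n, blockDiagonal' (R n)) * W).IsDiag := by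
      intro i j hij
      rw [Matrix.mul_sum, Matrix.sum_mul, Matrix.sum_apply]
      exact Finset.sum_eq_zero fun n _ => hd n hij
    have h := jd_aux_comm hW (hd a) (hd b) hdS hST
    simp only [← blockDiagonal'_mul] at h
    exact congrFun (blockDiagonal'_injective h) l
  · intro h
    choose W hW hd using h
    refine ⟨blockDiagonal' W, ?_, fun n => ?_⟩
    · refine isUnit_det_of_left_inverse (B := blockDiagonal' fun l => (W l)⁻¹) ?_
      rw [← blockDiagonal'_mul, ← blockDiagonal'_one]
      congr 1; ext1 l
      exact nonsing_inv_mul _ (hW l)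
    · rw [blockDiagonal'_conjTranspose, ← blockDiagonal'_mul, ← blockDiagonal'_mul]
      rintro ⟨k, i⟩ ⟨l, j⟩ hij
      by_cases hkl : k = l
      · subst hkl
        rw [blockDiagonal'_apply_eq]
        exact hd k n (fun h => hij (by rw [h]))
      · exact blockDiagonal'_apply_ne _ _ _ hkl
end

section
/- Let N, L be positive integers and M^(1), …, M^(L) positive integers with M = Σ_l M^(l). For each n = 1, …, N and l = 1, …, L, let R_n^(l) be an M^(l) × M^(l) Hermitian positive semidefinite complex matrix, and let R_n = blkdiag(R_n^(1), …, R_n^(L)). Assume S := Σ_{n=1}^N R_n is positive definite and that R_1, …, R_N are jointly diagonalizable. Then for every l = 1, …, L, the matrices R_1^(l), …, R_N^(l) are jointly diagonalizable. -/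
open Matrix
open scoped ComplexOrder

lemma jd_of_commute {k : ℕ} {ι : Type*} (T : ι → Matrix (Fin k) (Fin k) ℂ)
    (hT : ∀ i, (T i).IsHermitian) (hC : ∀ i j, T i * T j = T j * T i) :
    JointlyDiagonalizable T := by
  classical
  let A : ι → EuclideanSpace ℂ (Fin k) →ₗ[ℂ] EuclideanSpace ℂ (Fin k) :=
    fun i => (T i).toEuclideanLin
  have hA : ∀ i, (A i).IsSymmetric := fun i => isSymmetric_toEuclideanLin_iff.mpr (hT i)
  have hAC : Pairwise (Function.onFun Commute A) := by
    intro i j _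
    show A i * A j = A j * A i
    ext1 v
    simp only [A, Module.End.mul_apply, toEuclideanLin_apply, mulVec_mulVec, hC i j]
  have hO := LinearMap.IsSymmetric.orthogonalFamily_iInf_eigenspaces hA
  have hTop := LinearMap.IsSymmetric.iSup_iInf_eq_top_of_commute hA hAC
  let V : (ι → ℂ) → Submodule ℂ (EuclideanSpace ℂ (Fin k)) :=
    fun χ => ⨅ j, Module.End.eigenspace (A j) (χ j)
  have hfin : {χ | V χ ≠ ⊥}.Finite :=
    WellFoundedGT.finite_ne_bot_of_iSupIndep hO.independent
  haveI : Fintype {χ // V χ ≠ ⊥} := hfin.fintype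
  have hO' : OrthogonalFamily ℂ (fun i : {χ // V χ ≠ ⊥} => V i)
      (fun i => (V i).subtypeₗᵢ) := hO.comp Subtype.val_injective
  have hI : DirectSum.IsInternal (fun i : {χ // V χ ≠ ⊥} => V i) := by
    rw [hO'.isInternal_iff, iSup_ne_bot_subtype, Submodule.orthogonal_eq_bot_iff]
    exact hTop
  have hn : Module.finrank ℂ (EuclideanSpace ℂ (Fin k)) = k := finrank_euclideanSpace_fin
  let b := hI.subordinateOrthonormalBasis hn hO'
  let c : Fin k → ι → ℂ := fun a => (hI.subordinateOrthonormalBasisIndex hn a hO').1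
  have hb : ∀ a i, A i (b a) = c a i • b a := by
    intro a i
    have h := hI.subordinateOrthonormalBasis_subordinate hn a hO'
    exact Module.End.mem_eigenspace_iff.mp ((Submodule.mem_iInf _).mp h i)
  let U : Matrix (Fin k) (Fin k) ℂ := Matrix.of fun r a => b a r
  have hU : Uᴴ * U = 1 := by
    ext a a'
    have := (orthonormal_iff_ite.mp b.orthonormal) a a'
    rw [Matrix.one_apply, ← this, Matrix.mul_apply, PiLp.inner_apply]
    simp [U, mul_comm]
  have hTU : ∀ i, T i * U = U * diagonal (fun a => c a i) := by
    intro i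
    ext r a
    have := congrArg (fun v : EuclideanSpace ℂ (Fin k) => v r) (hb a i)
    simp only [A, ofLp_toEuclideanLin_apply] at this
    rw [Matrix.mul_diagonal, Matrix.mul_apply]
    simpa [U, mulVec, dotProduct, mul_comm] using this
  refine ⟨U, ?_, fun i => ?_⟩
  · exact (Matrix.isUnit_iff_isUnit_det _).mp (IsUnit.of_mul_eq_one_right _ hU)
  · rw [Matrix.mul_assoc, hTU, ← Matrix.mul_assoc, hU, Matrix.one_mul]
    exact isDiag_diagonal _

lemma jd_comm {m ι : Type*} [Fintype m] [DecidableEq m] [Fintype ι] (R : ι → Matrix m m ℂ)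
    (h : JointlyDiagonalizable R) (i j : ι) :
    R i * (∑ n, R n)⁻¹ * R j = R j * (∑ n, R n)⁻¹ * R i := by
  obtain ⟨W, hW, hD⟩ := h
  have hW' : IsUnit Wᴴ.det := by rw [det_conjTranspose]; exact hW.star
  set S := ∑ n, R n with hSdef
  have hDS : (Wᴴ * S * W).IsDiag := by
    intro a a' haa
    rw [hSdef, Matrix.mul_sum, Matrix.sum_mul, Matrix.sum_apply]
    exact Finset.sum_eq_zero fun n _ => hD n haa
  have key : ∀ i j, Wᴴ * (R i * S⁻¹ * R j) * W
      = (Wᴴ * R i * W) * (Wᴴ * S * W)⁻¹ * (Wᴴ * R j * W) := by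
    intro i j
    rw [Matrix.mul_inv_rev, Matrix.mul_inv_rev]
    simp only [Matrix.mul_assoc]
    rw [Matrix.mul_nonsing_inv_cancel_left _ _ hW, Matrix.nonsing_inv_mul_cancel_left _ _ hW']
  have key2 : Wᴴ * (R i * S⁻¹ * R j) * W = Wᴴ * (R j * S⁻¹ * R i) * W := by
    rw [key, key, ← (hD i).diagonal_diag, ← (hD j).diagonal_diag, ← hDS.diagonal_diag,
      inv_diagonal]
    simp only [diagonal_mul_diagonal]
    congr 1
    ext a
    ring
  have h3 := ((Matrix.isUnit_iff_isUnit_det _).mpr hW).mul_right_cancel key2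
  exact ((Matrix.isUnit_iff_isUnit_det _).mpr hW').mul_left_cancel h3

open scoped MatrixOrder in
lemma jd_of_comm {k : ℕ} {ι : Type*} (R : ι → Matrix (Fin k) (Fin k) ℂ)
    (S : Matrix (Fin k) (Fin k) ℂ) (hS : S.PosDef) (hR : ∀ i, (R i).IsHermitian)
    (h : ∀ i j, R i * S⁻¹ * R j = R j * S⁻¹ * R i) : JointlyDiagonalizable R := by
  obtain ⟨B, hB⟩ := CStarAlgebra.nonneg_iff_eq_star_mul_self.mp hS.inv.posSemidef.nonneg
  have hBu : IsUnit B.det := by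
    have h1 := (Matrix.isUnit_iff_isUnit_det _).mp hS.inv.isUnit
    rw [hB, det_mul] at h1
    exact isUnit_of_mul_isUnit_right h1
  rw [star_eq_conjTranspose] at hB
  obtain ⟨U, hU, hUD⟩ := jd_of_commute (fun i => B * R i * Bᴴ)
    (fun i => isHermitian_mul_mul_conjTranspose B (hR i)) (by
      intro i j
      have e : ∀ i j, B * R i * Bᴴ * (B * R j * Bᴴ) = B * (R i * S⁻¹ * R j) * Bᴴ := by
        intro i j
        rw [hB]
        simp only [Matrix.mul_assoc]
      rw [e, e, h])
  refine ⟨Bᴴ * U, ?_, fun n => ?_⟩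
  · rw [det_mul, det_conjTranspose]
    exact hBu.star.mul hU
  · have := hUD n
    simpa only [conjTranspose_mul, conjTranspose_conjTranspose, Matrix.mul_assoc] using this

/-- if the Hermitian PSD block-diagonal matrices `R n = blkdiag (R n 1, …, R n L)`
with positive definite sum are jointly diagonalizable, then for every `l` the blocks
`R 1 l, …, R N l` are jointly diagonalizable. -/
theorem blocks_jointlyDiagonalizable_of_blockDiagonal
    (N L : ℕ) (hN : 0 < N) (hL : 0 < L) (M : Fin L → ℕ) (hM : ∀ l, 0 < M l)
    (R : Fin N → ∀ l, Matrix (Fin (M l)) (Fin (M l)) ℂ)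
    (hR : ∀ n l, (R n l).PosSemidef)
    (hS : (∑ n, Matrix.blockDiagonal' (R n)).PosDef)
    (hJD : JointlyDiagonalizable (fun n => Matrix.blockDiagonal' (R n))) :
    ∀ l, JointlyDiagonalizable (fun n => R n l) := by
  have hsum : ∑ n, blockDiagonal' (R n) = blockDiagonal' (fun l => ∑ n, R n l) := by
    have := map_sum (blockDiagonal'AddMonoidHom (fun l => Fin (M l)) (fun l => Fin (M l)) ℂ)
      R Finset.univ
    simp only [blockDiagonal'AddMonoidHom_apply] at this
    rw [← this]
    congr 1
    ext l : 1
    simp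
  have hSl : ∀ l, (∑ n, R n l).PosDef := by
    intro l
    have := hS.submatrix (e := Sigma.mk l) sigma_mk_injective
    rw [hsum] at this
    convert this using 1
    ext a c
    simp [blockDiagonal'_apply_eq]
  have hinv : (∑ n, blockDiagonal' (R n))⁻¹ = blockDiagonal' (fun l => (∑ n, R n l)⁻¹) := by
    apply Matrix.inv_eq_right_inv
    rw [hsum, ← blockDiagonal'_mul, ← blockDiagonal'_one]
    congr 1
    ext l : 1
    exact Matrix.mul_nonsing_inv _ ((Matrix.isUnit_iff_isUnit_det _).mp (hSl l).isUnit)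
  intro l
  refine jd_of_comm _ (∑ n, R n l) (hSl l) (fun n => (hR n l).1) fun i j => ?_
  have h := jd_comm _ hJD i j
  simp only [hinv, ← blockDiagonal'_mul] at h
  exact congrFun (blockDiagonal'_injective h) l
end

section
/- Let I, J, M, K, N be nonempty finite index sets. Let y_{ijm} ∈ ℂ with y_{ijm} ≠ 0 for all (i,j,m) ∈ I×J×M, and let t_{ikn} > 0, v_{kjn} > 0, λ_{inm} > 0 be strictly positive reals for all relevant indices. Define η_{ijm}(t) = Σ_{k,n} t_{ikn} v_{kjn} λ_{inm} and the cost f(t) = Σ_{i,j,m} (|y_{ijm}|² / η_{ijm}(t) + ln η_{ijm}(t)). Define the multiplicative update t'_{ikn} = t_{ikn} · sqrt( (Σ_{j,m} v_{kjn} λ_{inm} |y_{ijm}|² η_{ijm}(t)^{−2}) / (Σ_{j,m} v_{kjn} λ_{inm} η_{ijm}(t)^{−1}) ) applied simultaneously for all (i,k,n). Then t'_{ikn} > 0 for all (i,k,n) and f(t') ≤ f(t). -/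
theorem mm_aux {A B : Type*} [Fintype A] [Fintype B] [Nonempty B]
    (Y : A → ℝ) (w : A → B → ℝ) (x r : B → ℝ) (e e' : A → ℝ) (P Q : B → ℝ)
    (hY : ∀ a, 0 < Y a) (hw : ∀ a b, 0 < w a b) (hx : ∀ b, 0 < x b) (hr : ∀ b, 0 < r b)
    (he : ∀ a, e a = ∑ b, x b * w a b) (he' : ∀ a, e' a = ∑ b, x b * r b * w a b)
    (hP : ∀ b, P b = ∑ a, w a b * Y a / e a ^ 2)
    (hQ : ∀ b, Q b = ∑ a, w a b / e a)
    (hPQ : ∀ b, P b = r b ^ 2 * Q b) :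
    ∑ a, (Y a / e' a + Real.log (e' a)) ≤ ∑ a, (Y a / e a + Real.log (e a)) := by
  have e0 : ∀ a, 0 < e a := fun a => by
    rw [he]
    exact Finset.sum_pos (fun b _ => mul_pos (hx b) (hw a b)) Finset.univ_nonempty
  have e0' : ∀ a, 0 < e' a := fun a => by
    rw [he']
    exact Finset.sum_pos (fun b _ => mul_pos (mul_pos (hx b) (hr b)) (hw a b))
      Finset.univ_nonempty
  have Q0 : ∀ b, 0 ≤ Q b := fun b => by
    rw [hQ]
    exact Finset.sum_nonneg (fun a _ => (div_pos (hw a b) (e0 a)).le)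
  have h1 : ∀ a, Real.log (e' a) ≤ Real.log (e a) + (e' a / e a - 1) := fun a => by
    have := Real.log_le_sub_one_of_pos (div_pos (e0' a) (e0 a))
    rw [Real.log_div (e0' a).ne' (e0 a).ne'] at this
    linarith
  have h2 : ∀ a, Y a / e' a ≤ Y a / e a ^ 2 * ∑ b, x b * w a b / r b := fun a => by
    have cs : e a ^ 2 ≤ e' a * ∑ b, x b * w a b / r b := by
      rw [he, he']
      apply Finset.sum_sq_le_sum_mul_sum_of_sq_eq_mul
      · intro b _
        exact (mul_pos (mul_pos (hx b) (hr b)) (hw a b)).le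
      · intro b _
        exact (div_pos (mul_pos (hx b) (hw a b)) (hr b)).le
      · intro b _
        have := (hr b).ne'
        field_simp
    rw [div_mul_eq_mul_div, div_le_div_iff₀ (e0' a) (pow_pos (e0 a) 2), mul_assoc]
    exact mul_le_mul_of_nonneg_left (by linarith) (hY a).le
  have s1 : ∑ a, (Y a / e a ^ 2 * ∑ b, x b * w a b / r b) = ∑ b, x b / r b * P b := by
    simp_rw [hP, Finset.mul_sum]
    rw [Finset.sum_comm]
    refine Finset.sum_congr rfl fun b _ => Finset.sum_congr rfl fun a _ => by ring
  have s2 : ∑ a, e' a / e a = ∑ b, x b * r b * Q b := by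
    simp_rw [hQ, he', Finset.mul_sum, Finset.sum_div]
    rw [Finset.sum_comm]
    refine Finset.sum_congr rfl fun b _ => Finset.sum_congr rfl fun a _ => by ring
  have s3 : ∑ a, Y a / e a = ∑ b, x b * P b := by
    simp_rw [hP, Finset.mul_sum]
    rw [Finset.sum_comm]
    refine Finset.sum_congr rfl fun a _ => ?_
    have : Y a / e a = (∑ b, x b * w a b) * (Y a / e a ^ 2) := by
      rw [← he]
      have := (e0 a).ne'
      field_simp
    rw [this, Finset.sum_mul]
    exact Finset.sum_congr rfl fun b _ => by ring
  have s4 : ∑ _a : A, (1 : ℝ) = ∑ b, x b * Q b := by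
    simp_rw [hQ, Finset.mul_sum]
    rw [Finset.sum_comm]
    refine Finset.sum_congr rfl fun a _ => ?_
    have : (1 : ℝ) = (∑ b, x b * w a b) * (1 / e a) := by
      rw [← he]
      have := (e0 a).ne'
      field_simp
    rw [this, Finset.sum_mul]
    exact Finset.sum_congr rfl fun b _ => by ring
  have s5 : ∑ b, x b / r b * P b + ∑ b, x b * r b * Q b
      ≤ ∑ b, x b * P b + ∑ b, x b * Q b := by
    rw [← Finset.sum_add_distrib, ← Finset.sum_add_distrib]
    refine Finset.sum_le_sum fun b _ => ?_
    have h := mul_nonneg (mul_nonneg (hx b).le (Q0 b)) (sq_nonneg (r b - 1))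
    have : x b / r b * P b = x b * r b * Q b := by
      rw [hPQ]
      have := (hr b).ne'
      field_simp
    rw [this, hPQ]
    nlinarith
  have s6 := Finset.sum_le_sum (fun a (_ : a ∈ Finset.univ) => add_le_add (h2 a) (h1 a))
  simp only [Finset.sum_add_distrib, Finset.sum_sub_distrib] at s6 ⊢
  linarith


/-- `η i j m = ∑ k, ∑ n, t i k n * v k j n * λ i n m`. -/
def fmEta {I J M K N : Type*} [Fintype K] [Fintype N]
    (t : I → K → N → ℝ) (v : K → J → N → ℝ) (lam : I → N → M → ℝ)
    (i : I) (j : J) (m : M) : ℝ :=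
  ∑ k, ∑ n, t i k n * v k j n * lam i n m

/-- FastMNMF cost `f = ∑ i j m, (|y i j m|² / η i j m + ln (η i j m))`. -/
noncomputable def fmCost {I J M K N : Type*}
    [Fintype I] [Fintype J] [Fintype M] [Fintype K] [Fintype N]
    (y : I → J → M → ℂ) (t : I → K → N → ℝ) (v : K → J → N → ℝ)
    (lam : I → N → M → ℝ) : ℝ :=
  ∑ i, ∑ j, ∑ m,
    (‖y i j m‖ ^ 2 / fmEta t v lam i j m + Real.log (fmEta t v lam i j m))

/-- The multiplicative MM update of the spectral bases `t`. -/
noncomputable def fmTUpdate {I J M K N : Type*}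
    [Fintype J] [Fintype M] [Fintype K] [Fintype N]
    (y : I → J → M → ℂ) (t : I → K → N → ℝ) (v : K → J → N → ℝ)
    (lam : I → N → M → ℝ) (i : I) (k : K) (n : N) : ℝ :=
  t i k n * Real.sqrt
    ((∑ j, ∑ m, v k j n * lam i n m * ‖y i j m‖ ^ 2 / (fmEta t v lam i j m) ^ 2) /
     (∑ j, ∑ m, v k j n * lam i n m / fmEta t v lam i j m))

/-- the multiplicative MM update of the spectral bases `t` preserves strict
positivity and does not increase the FastMNMF cost. -/
theorem fmTUpdate_pos_and_cost_nonincreasing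
    {I J M K N : Type*}
    [Fintype I] [Fintype J] [Fintype M] [Fintype K] [Fintype N]
    [Nonempty I] [Nonempty J] [Nonempty M] [Nonempty K] [Nonempty N]
    (y : I → J → M → ℂ) (hy : ∀ i j m, y i j m ≠ 0)
    (t : I → K → N → ℝ) (v : K → J → N → ℝ) (lam : I → N → M → ℝ)
    (ht : ∀ i k n, 0 < t i k n) (hv : ∀ k j n, 0 < v k j n)
    (hlam : ∀ i n m, 0 < lam i n m) :
    (∀ i k n, 0 < fmTUpdate y t v lam i k n) ∧
      fmCost y (fmTUpdate y t v lam) v lam ≤ fmCost y t v lam := by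
  have e0 : ∀ i j m, 0 < fmEta t v lam i j m := fun i j m =>
    Finset.sum_pos (fun k _ => Finset.sum_pos (fun n _ =>
      mul_pos (mul_pos (ht i k n) (hv k j n)) (hlam i n m)) Finset.univ_nonempty)
      Finset.univ_nonempty
  have y0 : ∀ i j m, 0 < ‖y i j m‖ ^ 2 := fun i j m => pow_pos (norm_pos_iff.2 (hy i j m)) 2
  have P0 : ∀ i k n, 0 < ∑ j, ∑ m, v k j n * lam i n m * ‖y i j m‖ ^ 2 /
      (fmEta t v lam i j m) ^ 2 := fun i k n =>
    Finset.sum_pos (fun j _ => Finset.sum_pos (fun m _ =>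
      div_pos (mul_pos (mul_pos (hv k j n) (hlam i n m)) (y0 i j m)) (pow_pos (e0 i j m) 2))
      Finset.univ_nonempty) Finset.univ_nonempty
  have Q0 : ∀ i k n, 0 < ∑ j, ∑ m, v k j n * lam i n m / fmEta t v lam i j m := fun i k n =>
    Finset.sum_pos (fun j _ => Finset.sum_pos (fun m _ =>
      div_pos (mul_pos (hv k j n) (hlam i n m)) (e0 i j m))
      Finset.univ_nonempty) Finset.univ_nonempty
  refine ⟨fun i k n => mul_pos (ht i k n) (Real.sqrt_pos.2 (div_pos (P0 i k n) (Q0 i k n))), ?_⟩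
  unfold fmCost
  refine Finset.sum_le_sum fun i _ => ?_
  have key := mm_aux (A := J × M) (B := K × N) (fun a => ‖y i a.1 a.2‖ ^ 2)
    (fun a b => v b.1 a.1 b.2 * lam i b.2 a.2) (fun b => t i b.1 b.2)
    (fun b => Real.sqrt
      ((∑ j, ∑ m, v b.1 j b.2 * lam i b.2 m * ‖y i j m‖ ^ 2 / (fmEta t v lam i j m) ^ 2) /
       (∑ j, ∑ m, v b.1 j b.2 * lam i b.2 m / fmEta t v lam i j m)))
    (fun a => fmEta t v lam i a.1 a.2)
    (fun a => fmEta (fmTUpdate y t v lam) v lam i a.1 a.2)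
    (fun b => ∑ j, ∑ m, v b.1 j b.2 * lam i b.2 m * ‖y i j m‖ ^ 2 / (fmEta t v lam i j m) ^ 2)
    (fun b => ∑ j, ∑ m, v b.1 j b.2 * lam i b.2 m / fmEta t v lam i j m)
    (fun a => y0 _ _ _) (fun a b => mul_pos (hv _ _ _) (hlam _ _ _)) (fun b => ht _ _ _)
    (fun b => Real.sqrt_pos.2 (div_pos (P0 i b.1 b.2) (Q0 i b.1 b.2)))
    (fun a => by simp only [fmEta, Fintype.sum_prod_type, mul_assoc])
    (fun a => by
      rw [fmEta, Fintype.sum_prod_type]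
      simp only [fmTUpdate, mul_assoc])
    (fun b => by simp only [Fintype.sum_prod_type])
    (fun b => by simp only [Fintype.sum_prod_type])
    (fun b => by
      rw [Real.sq_sqrt (div_pos (P0 i b.1 b.2) (Q0 i b.1 b.2)).le,
        div_mul_cancel₀ _ (Q0 i b.1 b.2).ne'])
  simpa only [Fintype.sum_prod_type] using key
end

section
/- Let I, J, M, K, N be nonempty finite index sets. Let y_{ijm} ∈ ℂ with y_{ijm} ≠ 0 for all (i,j,m) ∈ I×J×M, and let t_{ikn} > 0, v_{kjn} > 0, λ_{inm} > 0 be strictly positive reals for all relevant indices. Define η_{ijm}(v) = Σ_{k,n} t_{ikn} v_{kjn} λ_{inm} and the cost f(v) = Σ_{i,j,m} (|y_{ijm}|² / η_{ijm}(v) + ln η_{ijm}(v)). Define the multiplicative update v'_{kjn} = v_{kjn} · sqrt( (Σ_{i,m} t_{ikn} λ_{inm} |y_{ijm}|² η_{ijm}(v)^{−2}) / (Σ_{i,m} t_{ikn} λ_{inm} η_{ijm}(v)^{−1}) ) applied simultaneously for all (k,j,n). Then v'_{kjn} > 0 for all (k,j,n) and f(v') ≤ f(v). -/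
/-- The multiplicative MM update of the temporal activations `v`. -/
noncomputable def fmVUpdate {I J M K N : Type*}
    [Fintype I] [Fintype M] [Fintype K] [Fintype N]
    (y : I → J → M → ℂ) (t : I → K → N → ℝ) (v : K → J → N → ℝ)
    (lam : I → N → M → ℝ) (k : K) (j : J) (n : N) : ℝ :=
  v k j n * Real.sqrt
    ((∑ i, ∑ m, t i k n * lam i n m * ‖y i j m‖ ^ 2 / (fmEta t v lam i j m) ^ 2) /
     (∑ i, ∑ m, t i k n * lam i n m / fmEta t v lam i j m))

theorem fm_aux {P Q : Type*} [Fintype P] [Fintype Q] [Nonempty Q]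
    (Y : P → ℝ) (hY : ∀ p, 0 < Y p) (c : P → Q → ℝ) (hc : ∀ p q, 0 < c p q)
    (v s : Q → ℝ) (hv : ∀ q, 0 < v q) (hs : ∀ q, 0 < s q) (e e' : P → ℝ)
    (he : ∀ p, e p = ∑ q, c p q * v q) (he' : ∀ p, e' p = ∑ q, c p q * (v q * s q))
    (h : ∀ q, ∑ p, c p q * Y p / e p ^ 2 = s q ^ 2 * ∑ p, c p q / e p) :
    ∑ p, (Y p / e' p + Real.log (e' p)) ≤ ∑ p, (Y p / e p + Real.log (e p)) := by
  have ep : ∀ p, 0 < e p := fun p => by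
    rw [he]
    exact Finset.sum_pos (fun q _ => mul_pos (hc p q) (hv q)) Finset.univ_nonempty
  have ep' : ∀ p, 0 < e' p := fun p => by
    rw [he']
    exact Finset.sum_pos (fun q _ => mul_pos (hc p q) (mul_pos (hv q) (hs q)))
      Finset.univ_nonempty
  have key : ∀ p, (Y p / e' p + Real.log (e' p)) - (Y p / e p + Real.log (e p)) ≤
      ∑ q, (v q / s q - v q) * (c p q * Y p / e p ^ 2) +
        ∑ q, (v q * s q - v q) * (c p q / e p) := by
    intro p
    have h1 : Real.log (e' p) - Real.log (e p) ≤ e' p / e p - 1 := by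
      rw [← Real.log_div (ep' p).ne' (ep p).ne']
      exact Real.log_le_sub_one_of_pos (div_pos (ep' p) (ep p))
    have cs : e p ^ 2 ≤ (∑ q, c p q * (v q / s q)) * e' p := by
      rw [he, he']
      apply Finset.sum_sq_le_sum_mul_sum_of_sq_eq_mul
      · intro q _
        exact (mul_pos (hc p q) (div_pos (hv q) (hs q))).le
      · intro q _
        exact (mul_pos (hc p q) (mul_pos (hv q) (hs q))).le
      · intro q _
        have := (hs q).ne'
        field_simp
    have h2 : Y p / e' p ≤ (∑ q, c p q * (v q / s q)) * (Y p / e p ^ 2) := by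
      have := ep p
      have := hY p
      rw [← mul_div_assoc, div_le_div_iff₀ (ep' p) (by positivity)]
      nlinarith
    have h3 : ∑ q, (v q / s q - v q) * (c p q * Y p / e p ^ 2) =
        (∑ q, c p q * (v q / s q)) * (Y p / e p ^ 2) - Y p / e p := by
      have : Y p / e p = (∑ q, c p q * v q) * (Y p / e p ^ 2) := by
        rw [← he]
        have := (ep p).ne'
        field_simp
      rw [this, Finset.sum_mul, Finset.sum_mul, ← Finset.sum_sub_distrib]
      exact Finset.sum_congr rfl fun q _ => by ring
    have h4 : ∑ q, (v q * s q - v q) * (c p q / e p) = e' p / e p - 1 := by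
      have : (1 : ℝ) = (∑ q, c p q * v q) / e p := by
        rw [← he, div_self (ep p).ne']
      rw [this, he' p, Finset.sum_div, Finset.sum_div, ← Finset.sum_sub_distrib]
      exact Finset.sum_congr rfl fun q _ => by ring
    linarith
  rw [← sub_nonpos, ← Finset.sum_sub_distrib]
  refine (Finset.sum_le_sum fun p _ => key p).trans ?_
  rw [Finset.sum_add_distrib, Finset.sum_comm]
  nth_rewrite 2 [Finset.sum_comm]
  rw [← Finset.sum_add_distrib]
  refine Finset.sum_nonpos fun q _ => ?_
  rw [← Finset.mul_sum, ← Finset.mul_sum, h]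
  have hB : 0 ≤ ∑ p, c p q / e p := Finset.sum_nonneg fun p _ => (div_pos (hc p q) (ep p)).le
  have hq := (hs q).ne'
  have : (v q / s q - v q) * (s q ^ 2 * ∑ p, c p q / e p) +
      (v q * s q - v q) * ∑ p, c p q / e p =
      -(v q * (∑ p, c p q / e p) * (s q - 1) ^ 2) := by
    field_simp
    ring
  rw [this]
  have := hv q
  exact neg_nonpos.2 (by positivity)

/-- the multiplicative MM update of the temporal activations `v` preserves strict
positivity and does not increase the FastMNMF cost. -/
theorem fmVUpdate_pos_and_cost_nonincreasing
    {I J M K N : Type*}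
    [Fintype I] [Fintype J] [Fintype M] [Fintype K] [Fintype N]
    [Nonempty I] [Nonempty J] [Nonempty M] [Nonempty K] [Nonempty N]
    (y : I → J → M → ℂ) (hy : ∀ i j m, y i j m ≠ 0)
    (t : I → K → N → ℝ) (v : K → J → N → ℝ) (lam : I → N → M → ℝ)
    (ht : ∀ i k n, 0 < t i k n) (hv : ∀ k j n, 0 < v k j n)
    (hlam : ∀ i n m, 0 < lam i n m) :
    (∀ k j n, 0 < fmVUpdate y t v lam k j n) ∧
      fmCost y t (fmVUpdate y t v lam) lam ≤ fmCost y t v lam := by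
  have ep : ∀ i j m, 0 < fmEta t v lam i j m := fun i j m =>
    Finset.sum_pos (fun k _ => Finset.sum_pos
      (fun n _ => mul_pos (mul_pos (ht i k n) (hv k j n)) (hlam i n m))
      Finset.univ_nonempty) Finset.univ_nonempty
  have hY : ∀ i j m, 0 < ‖y i j m‖ ^ 2 := fun i j m => by
    have := norm_pos_iff.2 (hy i j m)
    positivity
  have hA : ∀ k j n, 0 < ∑ i, ∑ m,
      t i k n * lam i n m * ‖y i j m‖ ^ 2 / (fmEta t v lam i j m) ^ 2 := fun k j n =>
    Finset.sum_pos (fun i _ => Finset.sum_pos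
      (fun m _ => div_pos (mul_pos (mul_pos (ht i k n) (hlam i n m)) (hY i j m))
        (pow_pos (ep i j m) 2)) Finset.univ_nonempty) Finset.univ_nonempty
  have hB : ∀ k j n, 0 < ∑ i, ∑ m, t i k n * lam i n m / fmEta t v lam i j m := fun k j n =>
    Finset.sum_pos (fun i _ => Finset.sum_pos
      (fun m _ => div_pos (mul_pos (ht i k n) (hlam i n m)) (ep i j m))
      Finset.univ_nonempty) Finset.univ_nonempty
  refine ⟨fun k j n => mul_pos (hv k j n) (Real.sqrt_pos.2 (div_pos (hA k j n) (hB k j n))), ?_⟩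
  unfold fmCost
  rw [Finset.sum_comm]
  nth_rewrite 2 [Finset.sum_comm]
  refine Finset.sum_le_sum fun j _ => ?_
  have := fm_aux (P := I × M) (Q := K × N) (fun p => ‖y p.1 j p.2‖ ^ 2) (fun p => hY _ _ _)
    (fun p q => t p.1 q.1 q.2 * lam p.1 q.2 p.2) (fun p q => mul_pos (ht _ _ _) (hlam _ _ _))
    (fun q => v q.1 j q.2)
    (fun q => Real.sqrt
      ((∑ i, ∑ m, t i q.1 q.2 * lam i q.2 m * ‖y i j m‖ ^ 2 / (fmEta t v lam i j m) ^ 2) /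
        (∑ i, ∑ m, t i q.1 q.2 * lam i q.2 m / fmEta t v lam i j m)))
    (fun q => hv _ _ _) (fun q => Real.sqrt_pos.2 (div_pos (hA _ _ _) (hB _ _ _)))
    (fun p => fmEta t v lam p.1 j p.2)
    (fun p => fmEta t (fmVUpdate y t v lam) lam p.1 j p.2)
    (fun p => by
      rw [Fintype.sum_prod_type]
      exact Finset.sum_congr rfl fun k _ => Finset.sum_congr rfl fun n _ => by ring)
    (fun p => by
      rw [Fintype.sum_prod_type]
      exact Finset.sum_congr rfl fun k _ => Finset.sum_congr rfl fun n _ => by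
        simp only [fmVUpdate]
        ring)
    (fun q => by
      rw [Real.sq_sqrt (div_pos (hA _ _ _) (hB _ _ _)).le, Fintype.sum_prod_type,
        Fintype.sum_prod_type, div_mul_cancel₀ _ (hB _ _ _).ne'])
  rw [Fintype.sum_prod_type, Fintype.sum_prod_type] at this
  exact this
end

section
/- Let I, J, M, K, N be nonempty finite index sets. Let y_{ijm} ∈ ℂ with y_{ijm} ≠ 0 for all (i,j,m) ∈ I×J×M, and let t_{ikn} > 0, v_{kjn} > 0, λ_{inm} > 0 be strictly positive reals for all relevant indices. Define η_{ijm}(λ) = Σ_{k,n} t_{ikn} v_{kjn} λ_{inm} and the cost f(λ) = Σ_{i,j,m} (|y_{ijm}|² / η_{ijm}(λ) + ln η_{ijm}(λ)). Define the multiplicative update λ'_{inm} = λ_{inm} · sqrt( (Σ_{j,k} t_{ikn} v_{kjn} |y_{ijm}|² η_{ijm}(λ)^{−2}) / (Σ_{j,k} t_{ikn} v_{kjn} η_{ijm}(λ)^{−1}) ) applied simultaneously for all (i,n,m). Then λ'_{inm} > 0 for all (i,n,m) and f(λ') ≤ f(λ). -/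
/-- The multiplicative MM update of the diagonalized spatial covariances `λ`. -/
noncomputable def fmLamUpdate {I J M K N : Type*}
    [Fintype J] [Fintype K] [Fintype N]
    (y : I → J → M → ℂ) (t : I → K → N → ℝ) (v : K → J → N → ℝ)
    (lam : I → N → M → ℝ) (i : I) (n : N) (m : M) : ℝ :=
  lam i n m * Real.sqrt
    ((∑ j, ∑ k, t i k n * v k j n * ‖y i j m‖ ^ 2 / (fmEta t v lam i j m) ^ 2) /
     (∑ j, ∑ k, t i k n * v k j n / fmEta t v lam i j m))

theorem fm_point {N : Type*} [Fintype N] [Nonempty N] (Y : ℝ) (hY : 0 < Y)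
    (w r : N → ℝ) (hw : ∀ n, 0 < w n) (hr : ∀ n, 0 < r n) (e e1 : ℝ)
    (he : e = ∑ n, w n) (he1 : e1 = ∑ n, w n * r n) :
    (Y / e1 + Real.log e1) - (Y / e + Real.log e) ≤
      ∑ n, w n * (Y / e ^ 2 * (1 / r n - 1) + 1 / e * (r n - 1)) := by
  have hep : 0 < e := by
    rw [he]; exact Finset.sum_pos (fun n _ => hw n) Finset.univ_nonempty
  have he1p : 0 < e1 := by
    rw [he1]
    exact Finset.sum_pos (fun n _ => mul_pos (hw n) (hr n)) Finset.univ_nonempty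
  set s := ∑ n, w n / r n with hs
  have hcs : e ^ 2 ≤ e1 * s := by
    rw [he, he1, hs]
    apply Finset.sum_sq_le_sum_mul_sum_of_sq_le_mul
    · intro n _; exact (mul_pos (hw n) (hr n)).le
    · intro n _; exact (div_pos (hw n) (hr n)).le
    · intro n _
      have := (hr n).ne'
      apply le_of_eq
      field_simp
  have hR : ∑ n, w n * (Y / e ^ 2 * (1 / r n - 1) + 1 / e * (r n - 1))
      = Y / e ^ 2 * (s - e) + 1 / e * (e1 - e) := by
    have h1 : s - e = ∑ n, (w n / r n - w n) := by
      rw [Finset.sum_sub_distrib, ← he]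
    have h2 : e1 - e = ∑ n, (w n * r n - w n) := by
      rw [Finset.sum_sub_distrib, ← he, ← he1]
    rw [h1, h2, Finset.mul_sum, Finset.mul_sum, ← Finset.sum_add_distrib]
    apply Finset.sum_congr rfl
    intro n _
    ring
  rw [hR]
  have hlog : Real.log e1 - Real.log e ≤ e1 / e - 1 := by
    rw [← Real.log_div he1p.ne' hep.ne']
    exact Real.log_le_sub_one_of_pos (div_pos he1p hep)
  have hYb : Y / e1 ≤ Y / e ^ 2 * s := by
    rw [div_mul_eq_mul_div, div_le_div_iff₀ he1p (by positivity)]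
    nlinarith
  have h3 : Y / e ^ 2 * (s - e) = Y / e ^ 2 * s - Y / e := by
    field_simp
  have h4 : 1 / e * (e1 - e) = e1 / e - 1 := by
    field_simp
  rw [h3, h4]
  linarith

/-- the multiplicative MM update of the diagonalized spatial covariance entries
`λ` preserves strict positivity and does not increase the FastMNMF cost. -/
theorem fmLamUpdate_pos_and_cost_nonincreasing
    {I J M K N : Type*}
    [Fintype I] [Fintype J] [Fintype M] [Fintype K] [Fintype N]
    [Nonempty I] [Nonempty J] [Nonempty M] [Nonempty K] [Nonempty N]
    (y : I → J → M → ℂ) (hy : ∀ i j m, y i j m ≠ 0)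
    (t : I → K → N → ℝ) (v : K → J → N → ℝ) (lam : I → N → M → ℝ)
    (ht : ∀ i k n, 0 < t i k n) (hv : ∀ k j n, 0 < v k j n)
    (hlam : ∀ i n m, 0 < lam i n m) :
    (∀ i n m, 0 < fmLamUpdate y t v lam i n m) ∧
      fmCost y t v (fmLamUpdate y t v lam) ≤ fmCost y t v lam := by
  classical
  have heta : ∀ i j m, 0 < fmEta t v lam i j m := fun i j m =>
    Finset.sum_pos (fun k _ => Finset.sum_pos
      (fun n _ => mul_pos (mul_pos (ht i k n) (hv k j n)) (hlam i n m))
      Finset.univ_nonempty) Finset.univ_nonempty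
  have hYp : ∀ i j m, 0 < ‖y i j m‖ ^ 2 := fun i j m =>
    pow_pos (norm_pos_iff.mpr (hy i j m)) 2
  have hP : ∀ i n m, 0 < ∑ j, ∑ k, t i k n * v k j n * ‖y i j m‖ ^ 2 /
      (fmEta t v lam i j m) ^ 2 := fun i n m =>
    Finset.sum_pos (fun j _ => Finset.sum_pos
      (fun k _ => div_pos (mul_pos (mul_pos (ht i k n) (hv k j n)) (hYp i j m))
        (pow_pos (heta i j m) 2)) Finset.univ_nonempty) Finset.univ_nonempty
  have hQ : ∀ i n m, 0 < ∑ j, ∑ k, t i k n * v k j n / fmEta t v lam i j m :=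
    fun i n m => Finset.sum_pos (fun j _ => Finset.sum_pos
      (fun k _ => div_pos (mul_pos (ht i k n) (hv k j n)) (heta i j m))
        Finset.univ_nonempty) Finset.univ_nonempty
  refine ⟨fun i n m => mul_pos (hlam i n m)
    (Real.sqrt_pos.mpr (div_pos (hP i n m) (hQ i n m))), ?_⟩
  unfold fmCost
  apply Finset.sum_le_sum
  intro i _
  rw [Finset.sum_comm, Finset.sum_comm (s := (Finset.univ : Finset J))]
  apply Finset.sum_le_sum
  intro m _
  rw [← sub_nonpos, ← Finset.sum_sub_distrib]
  obtain ⟨r, hr⟩ : ∃ r : N → ℝ, ∀ n, r n = Real.sqrt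
    ((∑ j, ∑ k, t i k n * v k j n * ‖y i j m‖ ^ 2 / (fmEta t v lam i j m) ^ 2) /
     (∑ j, ∑ k, t i k n * v k j n / fmEta t v lam i j m)) := ⟨_, fun _ => rfl⟩
  have hrp : ∀ n, 0 < r n := fun n => by
    rw [hr]; exact Real.sqrt_pos.mpr (div_pos (hP i n m) (hQ i n m))
  have hup : ∀ n, fmLamUpdate y t v lam i n m = lam i n m * r n := fun n => by
    rw [hr]; rfl
  have hw : ∀ j n, 0 < (∑ k, t i k n * v k j n) * lam i n m := fun j n =>
    mul_pos (Finset.sum_pos (fun k _ => mul_pos (ht i k n) (hv k j n))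
      Finset.univ_nonempty) (hlam i n m)
  have key := fun j => fm_point (‖y i j m‖ ^ 2) (hYp i j m)
    (fun n => (∑ k, t i k n * v k j n) * lam i n m) r (hw j) hrp
    (fmEta t v lam i j m) (fmEta t v (fmLamUpdate y t v lam) i j m)
    (by
      unfold fmEta
      rw [Finset.sum_comm]
      exact Finset.sum_congr rfl fun n _ => (Finset.sum_mul _ _ _).symm)
    (by
      unfold fmEta
      rw [Finset.sum_comm]
      refine Finset.sum_congr rfl fun n _ => ?_
      rw [hup, mul_assoc, ← Finset.sum_mul])
  refine (Finset.sum_le_sum fun j _ => key j).trans ?_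
  rw [Finset.sum_comm]
  apply Finset.sum_nonpos
  intro n _
  have hPQ := Real.sq_sqrt (div_pos (hP i n m) (hQ i n m)).le
  rw [← hr, eq_div_iff (hQ i n m).ne'] at hPQ
  have hrn := hrp n
  have hQn := hQ i n m
  have hln := hlam i n m
  have heq : ∑ j, (∑ k, t i k n * v k j n) * lam i n m *
      (‖y i j m‖ ^ 2 / fmEta t v lam i j m ^ 2 * (1 / r n - 1) +
        1 / fmEta t v lam i j m * (r n - 1)) =
      lam i n m * ((∑ j, ∑ k, t i k n * v k j n * ‖y i j m‖ ^ 2 /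
        (fmEta t v lam i j m) ^ 2) * (1 / r n - 1) +
        (∑ j, ∑ k, t i k n * v k j n / fmEta t v lam i j m) * (r n - 1)) := by
    rw [Finset.sum_mul, Finset.sum_mul, ← Finset.sum_add_distrib, Finset.mul_sum]
    refine Finset.sum_congr rfl fun j _ => ?_
    rw [← Finset.sum_div, ← Finset.sum_div, ← Finset.sum_mul]
    ring
  rw [heq, ← hPQ]
  generalize (∑ j, ∑ k, t i k n * v k j n / fmEta t v lam i j m) = Q at hQn
  have : lam i n m * (r n ^ 2 * Q * (1 / r n - 1) + Q * (r n - 1))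
      = -(lam i n m * Q * (r n - 1) ^ 2) := by
    field_simp
    ring
  rw [this]
  have : 0 ≤ lam i n m * Q * (r n - 1) ^ 2 := by positivity
  linarith
end
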